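/- Let f be the complex function f(z) = (1 − z)·exp(−z/(1 − z)), defined for z ≠ 1. Then f is analytic on the open unit disc, and its Taylor coefficients at 0, tₙ = f⁽ⁿ⁾(0)/n!, satisfy Σₙ |tₙ| < ∞; in particular tₙ = O(n^{−5/4}) as n → ∞, and the Taylor series of f at 0 converges absolutely on the closed unit disc |z| ≤ 1. -/

import Mathlib

open scoped Nat

/-- The function `f(z) = (1 - z)·exp(-z/(1 - z))`. -/
noncomputable def f : ℂ → ℂ := fun z => (1 - z) * Complex.exp (-z / (1 - z))

/-- The `n`-th Taylor coefficient of `f` at the origin. -/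
noncomputable def t (n : ℕ) : ℂ := iteratedDeriv n f 0 / (n ! : ℂ)

/-!
The function `f` is the generating function of the Laguerre polynomials `L_n^(α)(x)` at `α = -2`,
`x = 1`. Its first-order differential equation turns into the three-term recurrence
`(n + 2) u_{n+2} = (2n + 3 + α - x) u_{n+1} - (n + 1 + α) u_n`. Writing `m = n + 1` and
`w = m (u_{n+1} - u_n)`, this is a discrete oscillator in `(u, w)`, and a quadratic energy
comparable to `x m |u|² + |w|²` is multiplied at each step by at most
`1 + (α + 1/2) / m + O(m^(-3/2))`. So the energy is `O(n^(α + 1/2))`, which gives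
`u_n = O(n^(α/2 - 1/4))`.
-/

open Filter Topology Asymptotics Finset
open scoped RealInnerProductSpace

theorem isBigO_exp_sum_of_le_one_add_mul {a c : ℕ → ℝ} (ha : ∀ᶠ n in atTop, 0 ≤ a n)
    (h : ∀ᶠ n in atTop, a (n + 1) ≤ (1 + c n) * a n) :
    a =O[atTop] fun n => Real.exp (∑ i ∈ range n, c i) := by
  obtain ⟨N, hN⟩ := eventually_atTop.1 (ha.and h)
  have bound : ∀ n ≥ N, a n ≤ a N * Real.exp (∑ i ∈ Ico N n, c i) := by
    intro n hn
    induction n, hn using Nat.le_induction with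
    | base => simp
    | succ n hn ih =>
      calc a (n + 1) ≤ (1 + c n) * a n := (hN n hn).2
        _ ≤ Real.exp (c n) * a n := by
          gcongr
          · exact (hN n hn).1
          · linarith [Real.add_one_le_exp (c n)]
        _ ≤ Real.exp (c n) * (a N * Real.exp (∑ i ∈ Ico N n, c i)) := by gcongr
        _ = a N * Real.exp (∑ i ∈ Ico N (n + 1), c i) := by
          rw [sum_Ico_succ_top hn, Real.exp_add]
          ring
  refine IsBigO.of_bound (a N * Real.exp (-∑ i ∈ range N, c i)) ?_
  filter_upwards [eventually_ge_atTop N] with n hn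
  rw [Real.norm_of_nonneg (hN n hn).1, Real.norm_of_nonneg (Real.exp_pos _).le, mul_assoc,
    ← Real.exp_add, neg_add_eq_sub, ← sum_Ico_eq_sub _ hn]
  exact bound n hn

theorem isBigO_exp_sum_div_add_rpow {ε : ℕ → ℝ} (hε : Summable ε) (s : ℝ) :
    (fun n => Real.exp (∑ i ∈ range n, (s / (i + 1) + ε i))) =O[atTop]
      fun n : ℕ => (n : ℝ) ^ s := by
  have bounded : (fun n : ℕ => Real.exp (s * (harmonic n - Real.log n) + ∑ i ∈ range n, ε i))
      =O[atTop] fun _ => (1 : ℝ) :=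
    ((Real.tendsto_harmonic_sub_log.const_mul s).add
      hε.hasSum.tendsto_sum_nat).rexp.isBigO_one ℝ
  refine (bounded.mul (isBigO_refl (fun n : ℕ => (n : ℝ) ^ s) atTop)).congr' ?_ (by simp)
  filter_upwards [eventually_gt_atTop 0] with n hn
  have sum_div : ∑ i ∈ range n, s / ((i : ℝ) + 1) = s * harmonic n := by
    simp [harmonic, mul_sum, div_eq_mul_inv]
  rw [Real.rpow_def_of_pos (by exact_mod_cast hn), ← Real.exp_add, sum_add_distrib, sum_div]
  ring_nf

theorem isBigO_rpow_of_le_one_add_div_add_mul {a ε : ℕ → ℝ} {s : ℝ}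
    (ha : ∀ᶠ n in atTop, 0 ≤ a n) (hε : Summable ε)
    (h : ∀ᶠ n : ℕ in atTop, a (n + 1) ≤ (1 + (s / (n + 1) + ε n)) * a n) :
    a =O[atTop] fun n : ℕ => (n : ℝ) ^ s :=
  (isBigO_exp_sum_of_le_one_add_mul ha h).trans (isBigO_exp_sum_div_add_rpow hε s)

section Energy

variable {E : Type*} [NormedAddCommGroup E] [InnerProductSpace ℝ E]

/-- The energy of the state `(u, w) = (u_n, m (u_{n+1} - u_n))`, `m = n + 1`, of the Laguerre
recurrence. The cross term is the correction of the leading part `x m ‖u‖² + ‖w‖²` which makes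
`x m ‖u‖²` and `‖w‖²` grow, to first order in `1 / m`, at the same rate `(α + 1/2) / m`. -/
noncomputable def laguerreEnergy (α x m : ℝ) (u w : E) : ℝ :=
  x * m * ‖u‖ ^ 2 + (1 / 2 + x - α) * ⟪u, w⟫ + ‖w‖ ^ 2

theorem laguerreEnergy_succ (α x : ℝ) {m : ℝ} (hm : m ≠ 0) (u w : E) :
    laguerreEnergy α x (m + 1) (u + m⁻¹ • w) ((1 + α / m) • w - x • (u + m⁻¹ • w)) =
      (1 + (α + 1 / 2) / m) * laguerreEnergy α x m u w +
        ((α + x) / 2 - 1 / 4) / m * ⟪u, w⟫ + (α + x) / 2 / m ^ 2 * ‖w‖ ^ 2 := by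
  simp only [laguerreEnergy, ← real_inner_self_eq_norm_sq, inner_add_left, inner_add_right,
    inner_sub_left, inner_sub_right, real_inner_smul_left, real_inner_smul_right,
    real_inner_comm u w]
  field_simp
  ring

theorem add_le_two_mul_laguerreEnergy {α x m : ℝ} (hm : (1 / 2 + x - α) ^ 2 ≤ x * m) (u w : E) :
    x * m * ‖u‖ ^ 2 + ‖w‖ ^ 2 ≤ 2 * laguerreEnergy α x m u w := by
  have cauchy_schwarz : |(1 / 2 + x - α) * ⟪u, w⟫| ≤ |1 / 2 + x - α| * (‖u‖ * ‖w‖) := by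
    rw [abs_mul]
    gcongr
    exact abs_real_inner_le_norm u w
  have young : 2 * (|1 / 2 + x - α| * (‖u‖ * ‖w‖)) ≤ x * m * ‖u‖ ^ 2 + ‖w‖ ^ 2 := by
    calc 2 * (|1 / 2 + x - α| * (‖u‖ * ‖w‖))
        ≤ (|1 / 2 + x - α| * ‖u‖) ^ 2 + ‖w‖ ^ 2 := by
          linarith [two_mul_le_add_sq (|1 / 2 + x - α| * ‖u‖) ‖w‖]
      _ ≤ x * m * ‖u‖ ^ 2 + ‖w‖ ^ 2 := by
          rw [mul_pow, sq_abs]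
          gcongr
  unfold laguerreEnergy
  linarith [neg_abs_le ((1 / 2 + x - α) * ⟪u, w⟫)]

theorem abs_inner_mul_sqrt_le_laguerreEnergy {α x m : ℝ} (hm : (1 / 2 + x - α) ^ 2 ≤ x * m)
    (u w : E) : |⟪u, w⟫| * √(x * m) ≤ laguerreEnergy α x m u w := by
  have young : 2 * (√(x * m) * ‖u‖) * ‖w‖ ≤ x * m * ‖u‖ ^ 2 + ‖w‖ ^ 2 := by
    simpa only [mul_pow, Real.sq_sqrt ((sq_nonneg _).trans hm)] using
      two_mul_le_add_sq (√(x * m) * ‖u‖) ‖w‖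
  calc |⟪u, w⟫| * √(x * m) ≤ ‖u‖ * ‖w‖ * √(x * m) := by
        gcongr
        exact abs_real_inner_le_norm u w
    _ ≤ laguerreEnergy α x m u w := by
        linarith [add_le_two_mul_laguerreEnergy hm u w]

theorem laguerreEnergy_succ_le {α x m : ℝ} (hx : 0 < x) (hm : 0 < m)
    (hmx : (1 / 2 + x - α) ^ 2 ≤ x * m) (u w : E) :
    laguerreEnergy α x (m + 1) (u + m⁻¹ • w) ((1 + α / m) • w - x • (u + m⁻¹ • w)) ≤
      (1 + ((α + 1 / 2) / m + (|(α + x) / 2 - 1 / 4| / (m * √(x * m)) + |α + x| / m ^ 2))) *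
        laguerreEnergy α x m u w := by
  have inner_term : ((α + x) / 2 - 1 / 4) / m * ⟪u, w⟫ ≤
      |(α + x) / 2 - 1 / 4| / (m * √(x * m)) * laguerreEnergy α x m u w :=
    calc ((α + x) / 2 - 1 / 4) / m * ⟪u, w⟫
        ≤ |(α + x) / 2 - 1 / 4| / m * |⟪u, w⟫| := by
          rw [← abs_of_pos hm, ← abs_div, ← abs_mul, abs_of_pos hm]
          exact le_abs_self _
      _ = |(α + x) / 2 - 1 / 4| / (m * √(x * m)) * (|⟪u, w⟫| * √(x * m)) := by
          field_simp
      _ ≤ _ := by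
          gcongr
          exact abs_inner_mul_sqrt_le_laguerreEnergy hmx u w
  have norm_term : (α + x) / 2 / m ^ 2 * ‖w‖ ^ 2 ≤
      |α + x| / m ^ 2 * laguerreEnergy α x m u w :=
    calc (α + x) / 2 / m ^ 2 * ‖w‖ ^ 2 ≤ |α + x| / 2 / m ^ 2 * (2 * laguerreEnergy α x m u w) := by
          gcongr
          · exact le_abs_self _
          · have : 0 ≤ x * m * ‖u‖ ^ 2 := by positivity
            linarith [add_le_two_mul_laguerreEnergy hmx u w]
      _ = |α + x| / m ^ 2 * laguerreEnergy α x m u w := by ring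
  rw [laguerreEnergy_succ α x hm.ne']
  linarith

theorem summable_div_mul_sqrt_add_div_sq {x : ℝ} (hx : 0 < x) (b c : ℝ) :
    Summable fun n : ℕ => b / (((n : ℝ) + 1) * √(x * (n + 1))) + c / ((n : ℝ) + 1) ^ 2 := by
  have summable_rpow {p : ℝ} (hp : p < -1) : Summable fun n : ℕ => ((n : ℝ) + 1) ^ p := by
    exact_mod_cast (summable_nat_add_iff 1).2 (Real.summable_nat_rpow.2 hp)
  refine (((summable_rpow (p := -(3 / 2)) (by norm_num)).mul_left (b / √x)).add
    ((summable_rpow (p := -2) (by norm_num)).mul_left c)).congr fun n => ?_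
  have hn : (0 : ℝ) < n + 1 := n.cast_add_one_pos
  have rpow_eq : ((n : ℝ) + 1) ^ (3 / 2 : ℝ) = (n + 1) * √(n + 1) := by
    rw [Real.sqrt_eq_rpow, ← Real.rpow_one_add' hn.le (by norm_num)]
    norm_num
  rw [Real.rpow_neg hn.le, Real.rpow_neg hn.le, rpow_eq, Real.rpow_two, Real.sqrt_mul hx.le]
  field_simp

theorem smul_sub_succ_of_laguerre_recurrence {α x : ℝ} {u : ℕ → E} {n : ℕ}
    (hu : ((n : ℝ) + 2) • u (n + 2) = (2 * n + 3 + α - x) • u (n + 1) - (n + 1 + α) • u n) :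
    ((n : ℝ) + 2) • (u (n + 2) - u (n + 1)) =
      (1 + α / ((n : ℝ) + 1)) • ((n : ℝ) + 1) • (u (n + 1) - u n) - x • u (n + 1) := by
  have coeff : (1 + α / ((n : ℝ) + 1)) * (n + 1) = n + 1 + α := by
    rw [add_mul, one_mul, div_mul_cancel₀ _ n.cast_add_one_ne_zero]
  rw [smul_smul, coeff, smul_sub, hu]
  module

theorem eventually_le_mul_natCast_add_one {x : ℝ} (hx : 0 < x) (b : ℝ) :
    ∀ᶠ n : ℕ in atTop, b ≤ x * ((n : ℝ) + 1) :=
  ((tendsto_natCast_atTop_atTop.atTop_add tendsto_const_nhds).const_mul_atTop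
    hx).eventually_ge_atTop b

theorem isBigO_laguerreEnergy {α x : ℝ} (hx : 0 < x) {u : ℕ → E}
    (hu : ∀ n : ℕ, ((n : ℝ) + 2) • u (n + 2) =
      (2 * n + 3 + α - x) • u (n + 1) - (n + 1 + α) • u n) :
    (fun n : ℕ => laguerreEnergy α x (n + 1) (u n) (((n : ℝ) + 1) • (u (n + 1) - u n)))
      =O[atTop] fun n : ℕ => (n : ℝ) ^ (α + 1 / 2) := by
  have large := eventually_le_mul_natCast_add_one hx ((1 / 2 + x - α) ^ 2)
  refine isBigO_rpow_of_le_one_add_div_add_mul ?_ (summable_div_mul_sqrt_add_div_sq hx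
    |(α + x) / 2 - 1 / 4| |α + x|) ?_
  · filter_upwards [large] with n hn
    exact (by positivity : (0 : ℝ) ≤ _).trans (abs_inner_mul_sqrt_le_laguerreEnergy hn _ _)
  · filter_upwards [large] with n hn
    have step := laguerreEnergy_succ_le hx n.cast_add_one_pos hn (u n)
      (((n : ℝ) + 1) • (u (n + 1) - u n))
    rw [inv_smul_smul₀ n.cast_add_one_ne_zero, add_sub_cancel,
      ← smul_sub_succ_of_laguerre_recurrence (hu n)] at step
    convert! step using 2
    · push_cast
      ring
    · push_cast
      ring_nf

theorem isBigO_rpow_of_laguerre_recurrence {α x : ℝ} (hx : 0 < x) {u : ℕ → E}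
    (hu : ∀ n : ℕ, ((n : ℝ) + 2) • u (n + 2) =
      (2 * n + 3 + α - x) • u (n + 1) - (n + 1 + α) • u n) :
    u =O[atTop] fun n : ℕ => (n : ℝ) ^ (α / 2 - 1 / 4) := by
  have sq_le_energy : (fun n : ℕ => (n : ℝ) * ‖u n‖ ^ 2) =O[atTop] fun n : ℕ =>
      laguerreEnergy α x (n + 1) (u n) (((n : ℝ) + 1) • (u (n + 1) - u n)) := by
    refine IsBigO.of_bound (2 / x) ?_
    filter_upwards [eventually_le_mul_natCast_add_one hx ((1 / 2 + x - α) ^ 2)] with n hn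
    rw [Real.norm_of_nonneg (by positivity), div_mul_eq_mul_div, le_div_iff₀ hx]
    have coercive := add_le_two_mul_laguerreEnergy hn (u n) (((n : ℝ) + 1) • (u (n + 1) - u n))
    calc
      n * ‖u n‖ ^ 2 * x ≤ x * (n + 1) * ‖u n‖ ^ 2 := by
        linarith [mul_nonneg hx.le (sq_nonneg ‖u n‖)]
      _ ≤ 2 * laguerreEnergy α x (n + 1) (u n) (((n : ℝ) + 1) • (u (n + 1) - u n)) := by
        linarith [sq_nonneg ‖((n : ℝ) + 1) • (u (n + 1) - u n)‖]
      _ ≤ _ := by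
        gcongr
        exact Real.le_norm_self _
  have sq_isBigO : (fun n => ‖u n‖ ^ 2) =O[atTop]
      fun n : ℕ => ((n : ℝ) ^ (α / 2 - 1 / 4)) ^ 2 := by
    refine ((isBigO_refl (fun n : ℕ => (n : ℝ)⁻¹) atTop).mul (sq_le_energy.trans
      (isBigO_laguerreEnergy hx hu))).congr' ?_ ?_
    all_goals
      filter_upwards [eventually_gt_atTop 0] with n hn
      have hn : (0 : ℝ) < n := by exact_mod_cast hn
    · exact inv_mul_cancel_left₀ hn.ne' _
    · rw [← Real.rpow_neg_one, ← Real.rpow_add hn, ← Real.rpow_mul_natCast hn.le]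
      ring_nf
  exact (IsBigO.of_pow two_ne_zero sq_isBigO).of_norm_left

end Energy

section TaylorCoeff

variable {𝕜 : Type*} [NontriviallyNormedField 𝕜] {F G : 𝕜 → 𝕜}

/-- The `n`-th Taylor coefficient of `F` at `0`. -/
noncomputable def taylorCoeff (F : 𝕜 → 𝕜) (n : ℕ) : 𝕜 := iteratedDeriv n F 0 / (n ! : 𝕜)

theorem taylorCoeff_congr (h : F =ᶠ[𝓝 0] G) (n : ℕ) : taylorCoeff F n = taylorCoeff G n := by
  rw [taylorCoeff, h.iteratedDeriv_eq, taylorCoeff]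

theorem taylorCoeff_add {n : ℕ} (hF : ContDiffAt 𝕜 n F 0) (hG : ContDiffAt 𝕜 n G 0) :
    taylorCoeff (F + G) n = taylorCoeff F n + taylorCoeff G n := by
  rw [taylorCoeff, iteratedDeriv_add hF hG, add_div, taylorCoeff, taylorCoeff]

theorem taylorCoeff_sub {n : ℕ} (hF : ContDiffAt 𝕜 n F 0) (hG : ContDiffAt 𝕜 n G 0) :
    taylorCoeff (F - G) n = taylorCoeff F n - taylorCoeff G n := by
  rw [taylorCoeff, iteratedDeriv_sub hF hG, sub_div, taylorCoeff, taylorCoeff]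

theorem taylorCoeff_const_smul (c : 𝕜) (n : ℕ) : taylorCoeff (c • F) n = c * taylorCoeff F n := by
  rw [taylorCoeff, iteratedDeriv_const_smul_field, smul_eq_mul, mul_div_assoc, taylorCoeff]

theorem taylorCoeff_deriv [CharZero 𝕜] (n : ℕ) :
    taylorCoeff (deriv F) n = (n + 1) * taylorCoeff F (n + 1) := by
  have : (n : 𝕜) + 1 ≠ 0 := n.cast_add_one_ne_zero
  rw [taylorCoeff, taylorCoeff, iteratedDeriv_succ', Nat.factorial_succ]
  push_cast
  field_simp

theorem taylorCoeff_id_mul_succ [CharZero 𝕜] {n : ℕ} (hF : ContDiffAt 𝕜 (n + 1 : ℕ) F 0) :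
    taylorCoeff (id * F) (n + 1) = taylorCoeff F n := by
  have : (n : 𝕜) + 1 ≠ 0 := n.cast_add_one_ne_zero
  rw [taylorCoeff, taylorCoeff, iteratedDeriv_mul contDiffAt_id hF, sum_eq_single 1]
  · simp only [iteratedDeriv_id, one_ne_zero, if_false, if_true, Nat.choose_one_right, mul_one,
      Nat.add_sub_cancel, Nat.factorial_succ, Nat.cast_mul, Nat.cast_succ]
    field_simp
  · intro i _ hi
    simp [iteratedDeriv_id, hi]
  · simp

theorem taylorCoeff_id_mul_deriv [CharZero 𝕜] {n : ℕ} (hF : ContDiffAt 𝕜 n (deriv F) 0) :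
    taylorCoeff (id * deriv F) n = n * taylorCoeff F n := by
  cases n with
  | zero => simp [taylorCoeff]
  | succ n => rw [taylorCoeff_id_mul_succ hF, taylorCoeff_deriv, Nat.cast_succ]

theorem taylorCoeff_laguerre_recurrence [CharZero 𝕜] [CompleteSpace 𝕜] {α x : 𝕜}
    (hF : AnalyticAt 𝕜 F 0)
    (hODE : ∀ᶠ z in 𝓝 0, (1 - z) ^ 2 * deriv F z = ((α + 1) * (1 - z) - x) * F z) (n : ℕ) :
    (n + 2) * taylorCoeff F (n + 2) =
      (2 * n + 3 + α - x) * taylorCoeff F (n + 1) - (n + 1 + α) * taylorCoeff F n := by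
  have expanded : deriv F + id * (id * deriv F) + x • F =ᶠ[𝓝 0]
      (2 : 𝕜) • (id * deriv F) + (α + 1) • (F - id * F) := by
    filter_upwards [hODE] with z hz
    simp only [Pi.add_apply, Pi.sub_apply, Pi.mul_apply, Pi.smul_apply, smul_eq_mul, id_eq]
    linear_combination hz
  have hF' : AnalyticAt 𝕜 (deriv F) 0 := hF.deriv
  have hzF : AnalyticAt 𝕜 (id * F) 0 := analyticAt_id.mul hF
  have hzF' : AnalyticAt 𝕜 (id * deriv F) 0 := analyticAt_id.mul hF'
  have hzzF' : AnalyticAt 𝕜 (id * (id * deriv F)) 0 := analyticAt_id.mul hzF'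
  have coeff_eq := taylorCoeff_congr expanded (n + 1)
  rw [taylorCoeff_add (hF'.add hzzF').contDiffAt hF.const_smul.contDiffAt,
    taylorCoeff_add hF'.contDiffAt hzzF'.contDiffAt,
    taylorCoeff_add hzF'.const_smul.contDiffAt (hF.sub hzF).const_smul.contDiffAt,
    taylorCoeff_const_smul, taylorCoeff_const_smul, taylorCoeff_const_smul,
    taylorCoeff_sub hF.contDiffAt hzF.contDiffAt,
    taylorCoeff_id_mul_succ hzF'.contDiffAt, taylorCoeff_id_mul_succ hF.contDiffAt,
    taylorCoeff_id_mul_deriv hF'.contDiffAt, taylorCoeff_id_mul_deriv hF'.contDiffAt,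
    taylorCoeff_deriv] at coeff_eq
  push_cast at coeff_eq
  linear_combination coeff_eq

end TaylorCoeff

/-- The function `(1 - z) ^ (-(α + 1)) * exp (-x z / (1 - z))` generating the Laguerre polynomials
`L_n^(α)(x)`. The principal branch of the power is the analytic one on the unit disc, where
`0 < re (1 - z)`. -/
noncomputable def laguerreGeneratingFunction (α x z : ℂ) : ℂ :=
  (1 - z) ^ (-(α + 1)) * Complex.exp (-(x * z) / (1 - z))

theorem one_sub_mem_slitPlane {z : ℂ} (hz : ‖z‖ < 1) : 1 - z ∈ Complex.slitPlane := by
  simpa only [sub_eq_add_neg] using Complex.mem_slitPlane_of_norm_lt_one (norm_neg z ▸ hz)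

theorem analyticOnNhd_laguerreGeneratingFunction (α x : ℂ) :
    AnalyticOnNhd ℂ (laguerreGeneratingFunction α x) (Metric.ball 0 1) := by
  intro z hz
  have hz' := one_sub_mem_slitPlane (mem_ball_zero_iff.1 hz)
  have := Complex.slitPlane_ne_zero hz'
  unfold laguerreGeneratingFunction
  fun_prop (disch := assumption)

theorem laguerreGeneratingFunction_ode (α x : ℂ) {z : ℂ} (hz : ‖z‖ < 1) :
    (1 - z) ^ 2 * deriv (laguerreGeneratingFunction α x) z =
      ((α + 1) * (1 - z) - x) * laguerreGeneratingFunction α x z := by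
  have mem := one_sub_mem_slitPlane hz
  have ne_zero : 1 - z ≠ 0 := Complex.slitPlane_ne_zero mem
  have one_sub : HasDerivAt (fun w : ℂ => 1 - w) (-1) z := (hasDerivAt_id z).const_sub 1
  have F_deriv : HasDerivAt (laguerreGeneratingFunction α x) _ z :=
    (one_sub.cpow_const (c := -(α + 1)) mem).mul
      ((((hasDerivAt_id' z).const_mul x).fun_neg.fun_div one_sub ne_zero).cexp)
  rw [F_deriv.deriv, Complex.cpow_sub _ _ ne_zero, Complex.cpow_one, laguerreGeneratingFunction]
  field_simp
  ring

theorem isBigO_taylorCoeff_laguerreGeneratingFunction (α : ℝ) {x : ℝ} (hx : 0 < x) :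
    taylorCoeff (laguerreGeneratingFunction α x) =O[atTop]
      fun n : ℕ => (n : ℝ) ^ (α / 2 - 1 / 4) := by
  refine isBigO_rpow_of_laguerre_recurrence hx fun n => ?_
  have ode : ∀ᶠ z in 𝓝 0, (1 - z) ^ 2 * deriv (laguerreGeneratingFunction α x) z =
      (((α : ℂ) + 1) * (1 - z) - x) * laguerreGeneratingFunction α x z := by
    filter_upwards [Metric.ball_mem_nhds (0 : ℂ) one_pos] with z hz
    exact laguerreGeneratingFunction_ode α x (mem_ball_zero_iff.1 hz)
  simpa only [Complex.real_smul, Complex.ofReal_add, Complex.ofReal_sub, Complex.ofReal_mul,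
    Complex.ofReal_natCast, Complex.ofReal_ofNat, Complex.ofReal_one] using
    taylorCoeff_laguerre_recurrence (analyticOnNhd_laguerreGeneratingFunction α x 0 (by simp)) ode n

theorem summable_norm_mul_pow {𝕜 : Type*} [NormedField 𝕜] {a : ℕ → 𝕜}
    (ha : Summable fun n => ‖a n‖) {z : 𝕜} (hz : ‖z‖ ≤ 1) : Summable fun n => ‖a n * z ^ n‖ := by
  refine Summable.of_nonneg_of_le (fun _ => norm_nonneg _) (fun n => ?_) ha
  rw [norm_mul, norm_pow]
  exact mul_le_of_le_one_right (norm_nonneg _) (pow_le_one₀ (norm_nonneg _) hz)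

theorem taylor_coefficients_of_f_general (α : ℝ) {x : ℝ} (hx : 0 < x) :
    AnalyticOnNhd ℂ (laguerreGeneratingFunction α x) (Metric.ball 0 1) ∧
    (α < -(3 / 2) → Summable fun n => ‖taylorCoeff (laguerreGeneratingFunction α x) n‖) ∧
    (taylorCoeff (laguerreGeneratingFunction α x) =O[atTop]
      fun n : ℕ => (n : ℝ) ^ (α / 2 - 1 / 4)) ∧
    (α < -(3 / 2) → ∀ z : ℂ, ‖z‖ ≤ 1 →
      Summable fun n => ‖taylorCoeff (laguerreGeneratingFunction α x) n * z ^ n‖) := by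
  have decay := isBigO_taylorCoeff_laguerreGeneratingFunction α hx
  have summable_coeff (hα : α < -(3 / 2)) :
      Summable fun n => ‖taylorCoeff (laguerreGeneratingFunction α x) n‖ :=
    summable_of_isBigO_nat (Real.summable_nat_rpow.2 (by linarith)) decay.norm_left
  exact ⟨analyticOnNhd_laguerreGeneratingFunction α x, summable_coeff, decay,
    fun hα _ hz => summable_norm_mul_pow (summable_coeff hα) hz⟩

theorem laguerreGeneratingFunction_neg_two_one :
    laguerreGeneratingFunction (-2 : ℝ) (1 : ℝ) = f := by
  funext z
  norm_num [laguerreGeneratingFunction, f]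

theorem taylor_coefficients_of_f :
    AnalyticOnNhd ℂ f (Metric.ball (0 : ℂ) 1) ∧
    Summable (fun n : ℕ => ‖t n‖) ∧
    (fun n : ℕ => t n) =O[Filter.atTop] (fun n : ℕ => (n : ℝ) ^ (-(5 / 4 : ℝ))) ∧
    ∀ z : ℂ, ‖z‖ ≤ 1 → Summable (fun n : ℕ => ‖t n * z ^ n‖) := by
  obtain ⟨analytic, summable_coeff, decay, summable_series⟩ :=
    laguerreGeneratingFunction_neg_two_one ▸ taylor_coefficients_of_f_general (-2) one_pos
  have exponent : (-2 : ℝ) / 2 - 1 / 4 = -(5 / 4) := by norm_num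
  exact ⟨analytic, summable_coeff (by norm_num), exponent ▸ decay, summable_series (by norm_num)⟩
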